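/- There exist an absolute constant c₀ ≥ 2 and C > 0 with the following property. Let N₁, N₂, L₁, L₂ be dyadic numbers with N₁ ≥ c₀ N₂, and let u₁, u₂ ∈ 𝒮(ℝ×ℝ²) be such that the space-time Fourier transform ũᵢ(τ,ξ,η) is supported in { (τ,ξ,η) : Nᵢ/2 ≤ |(ξ,η)| ≤ 2Nᵢ and Lᵢ/2 ≤ |τ − ξ³ − η³| ≤ 2Lᵢ } for i = 1, 2. Then ‖u₁ u₂‖_{L²_{t,x,y}(ℝ×ℝ²)} ≤ C N₁^{-1} N₂^{1/2} L₁^{1/2} L₂^{1/2} ‖u₁‖_{L²_{t,x,y}} ‖u₂‖_{L²_{t,x,y}}. -/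

import Mathlib

/-!
By Plancherel, `‖u₁ u₂‖_{L²}` is the `L²` norm of the convolution of the two Fourier transforms.
Cauchy–Schwarz in the convolution integral at output frequency `ζ` costs the square root of the
measure of `supp û₁ ∩ (ζ - supp û₂)` (`lintegral_mul_sq_le`), so it suffices to bound this measure
by a multiple of `N₁⁻² N₂ L₁ L₂`, uniformly in `ζ` (`volume_interactionSet_le`).

For a fixed spatial frequency `k`, the time frequency lies in an interval of length `4 min L₁ L₂`,
and it exists only if the resonance function `φ(k) + φ(q - k)`, with `φ(ξ, η) = ξ³ + η³`, is within
`4 max L₁ L₂` of the output time frequency. Since `|k| ≳ N₁`, one of the components of `k` is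
`≳ N₁` while both components of `q - k` are `≲ N₂ ≪ N₁`; in the direction of the large component
the resonance function is a quadratic polynomial with slope `∼ N₁²`, which confines that component
to a set of diameter `≲ max L₁ L₂ / N₁²` (`volume_slice_le`). The other component of `q - k` ranges
over an interval of length `4 N₂`. Multiplying the three lengths gives the claim.

The Fourier theory of Mathlib requires an inner product space, so the estimate is carried out on
the Euclidean version `E3` of `ℝ × ℝ × ℝ`; its Fourier transform is `ftt` dilated by `2π`.
-/


noncomputable section

open MeasureTheory
open scoped ENNReal

/-- Space-time Fourier transform `ũ(τ,ξ,η)` of a function `u(t,x,y)`. -/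
def ftt (w : ℝ → ℝ → ℝ → ℂ) (τ ξ η : ℝ) : ℂ :=
  ∫ t : ℝ, ∫ x : ℝ, ∫ y : ℝ,
    Complex.exp (-Complex.I * ((t * τ + x * ξ + y * η : ℝ) : ℂ)) * w t x y

/-- L² norm over all of `ℝ × ℝ²`. -/
def l2norm3 (w : ℝ → ℝ → ℝ → ℂ) : ℝ≥0∞ :=
  (∫⁻ v : ℝ × ℝ × ℝ, (‖w v.1 v.2.1 v.2.2‖₊ : ℝ≥0∞) ^ (2 : ℝ)) ^ ((1 : ℝ) / 2)

/-! ### Measure of the resonant sets -/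

/-- If `x` is large and `s - x` is small, the quadratic polynomial `x ↦ x³ + (s - x)³` has slope
`≳ N²`, so it stays in an interval of length `2K` only on a set of diameter `≲ K / N²`. -/
lemma volume_slice_le {N K : ℝ} (hN : 0 < N) (s c : ℝ) :
    volume {x : ℝ | N ^ 2 / 8 ≤ x ^ 2 ∧ |s - x| ≤ N / 16 ∧ |c - (x ^ 3 + (s - x) ^ 3)| ≤ K} ≤
      ENNReal.ofReal (11 * K / N ^ 2) := by
  refine (Real.volume_le_diam _).trans (Metric.ediam_le ?_)
  rintro a ⟨ha1, ha2, ha3⟩ b ⟨hb1, hb2, hb3⟩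
  rw [edist_dist, Real.dist_eq]
  apply ENNReal.ofReal_le_ofReal
  have hlow : ∀ x : ℝ, N ^ 2 / 8 ≤ x ^ 2 → N / 3 ≤ |x| := by
    intro x hx
    apply le_of_sq_le_sq _ (abs_nonneg x)
    rw [sq_abs]; nlinarith [sq_nonneg N]
  have ha := hlow a ha1
  have hb := hlow b hb1
  have hs : N / 4 ≤ |s| := by
    have := abs_sub_abs_le_abs_sub a s
    rw [abs_sub_comm] at this; linarith
  have hab : N / 4 ≤ |a + b - s| := by
    have := abs_sub_abs_le_abs_sub b (s - a)
    rw [show b - (s - a) = a + b - s by ring] at this; linarith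
  -- factorisation of the difference of the two values of the polynomial
  have hfac : 3 * |s| * |a + b - s| * |a - b| ≤ 2 * K := by
    have h : 3 * |s| * |a + b - s| * |a - b| =
        |(c - (b ^ 3 + (s - b) ^ 3)) - (c - (a ^ 3 + (s - a) ^ 3))| := by
      rw [show (c - (b ^ 3 + (s - b) ^ 3)) - (c - (a ^ 3 + (s - a) ^ 3)) =
        3 * s * (a + b - s) * (a - b) by ring, abs_mul, abs_mul, abs_mul]
      norm_num
    rw [h]
    exact (abs_sub _ _).trans (by linarith)
  have hmul : N / 4 * (N / 4) ≤ |s| * |a + b - s| := by gcongr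
  have h2 : N / 4 * (N / 4) * |a - b| ≤ |s| * |a + b - s| * |a - b| := by gcongr
  rw [le_div_iff₀ (by positivity)]
  nlinarith [abs_nonneg (a - b), abs_nonneg (c - (a ^ 3 + (s - a) ^ 3))]

/-- Cavalieri bound: slices over the second coordinate of size at most `c`, empty off `T`. -/
lemma prod_le_of_slice {α β : Type*} [MeasureSpace α] [MeasureSpace β]
    [SFinite (volume : Measure α)] [SFinite (volume : Measure β)]
    {S : Set (α × β)} (hS : MeasurableSet S) (T : Set β) (c : ℝ≥0∞)
    (hT : ∀ a b, (a, b) ∈ S → b ∈ T) (hc : ∀ b, volume {a | (a, b) ∈ S} ≤ c) :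
    volume S ≤ c * volume T := by
  rw [Measure.volume_eq_prod, Measure.prod_apply_symm hS]
  refine le_trans (lintegral_mono fun b => ?_) (lintegral_indicator_const_le T c)
  by_cases hb : b ∈ T
  · rw [Set.indicator_of_mem hb]; exact hc b
  · have : (fun a => (a, b)) ⁻¹' S = ∅ := by
      ext a; simpa using fun h => hb (hT a b h)
    simp [this]

/-- Mirror image of `prod_le_of_slice`, slicing over the first coordinate. -/
lemma prod_le_of_slice' {α β : Type*} [MeasureSpace α] [MeasureSpace β]
    [SFinite (volume : Measure α)] [SFinite (volume : Measure β)]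
    {S : Set (α × β)} (hS : MeasurableSet S) (T : Set α) (c : ℝ≥0∞)
    (hT : ∀ a b, (a, b) ∈ S → a ∈ T) (hc : ∀ a, volume {b | (a, b) ∈ S} ≤ c) :
    volume S ≤ c * volume T := by
  rw [Measure.volume_eq_prod, Measure.prod_apply hS]
  refine le_trans (lintegral_mono fun b => ?_) (lintegral_indicator_const_le T c)
  by_cases hb : b ∈ T
  · rw [Set.indicator_of_mem hb]; exact hc b
  · have : (fun a => (b, a)) ⁻¹' S = ∅ := by
      ext a; simpa using fun h => hb (hT b a h)
    simp [this]

lemma volume_abs_sub_le (s r : ℝ) : volume {x : ℝ | |s - x| ≤ r} = ENNReal.ofReal (2 * r) := by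
  have : {x : ℝ | |s - x| ≤ r} = Metric.closedBall s r := by
    ext x; simp [Real.dist_eq, abs_sub_comm]
  rw [this, Real.volume_closedBall]

/-- The spatial frequencies `k = (ξ₁, η₁)` with `|k| ≳ N₁`, `|q - k| ≲ N₂` at which the resonance
function of the interaction `k + (q - k)` is within `K` of `τ`. -/
def spatialSet (N₁ N₂ K τ : ℝ) (q : ℝ × ℝ) : Set (ℝ × ℝ) :=
  {k | N₁ ^ 2 / 4 ≤ k.1 ^ 2 + k.2 ^ 2 ∧ |q.1 - k.1| ≤ 2 * N₂ ∧ |q.2 - k.2| ≤ 2 * N₂ ∧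
    |τ - (k.1 ^ 3 + k.2 ^ 3) - ((q.1 - k.1) ^ 3 + (q.2 - k.2) ^ 3)| ≤ K}

/-- One of the two components of `k` is `≳ N₁`; slicing in that direction gains `K / N₁²`, while
the other component ranges over an interval of length `4 N₂`. -/
lemma volume_spatialSet_le {N₁ N₂ K : ℝ} (hN₂ : 0 < N₂) (hK : 0 ≤ K) (hN : 32 * N₂ ≤ N₁)
    (τ : ℝ) (q : ℝ × ℝ) :
    volume (spatialSet N₁ N₂ K τ q) ≤ ENNReal.ofReal (88 * K * N₂ / N₁ ^ 2) := by
  have hN₁ : 0 < N₁ := by linarith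
  set Sx : Set (ℝ × ℝ) := {k | N₁ ^ 2 / 8 ≤ k.1 ^ 2 ∧ |q.1 - k.1| ≤ 2 * N₂ ∧
    |q.2 - k.2| ≤ 2 * N₂ ∧
    |τ - (k.1 ^ 3 + k.2 ^ 3) - ((q.1 - k.1) ^ 3 + (q.2 - k.2) ^ 3)| ≤ K} with hSx
  set Sy : Set (ℝ × ℝ) := {k | N₁ ^ 2 / 8 ≤ k.2 ^ 2 ∧ |q.1 - k.1| ≤ 2 * N₂ ∧
    |q.2 - k.2| ≤ 2 * N₂ ∧
    |τ - (k.1 ^ 3 + k.2 ^ 3) - ((q.1 - k.1) ^ 3 + (q.2 - k.2) ^ 3)| ≤ K} with hSy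
  have hsub : spatialSet N₁ N₂ K τ q ⊆ Sx ∪ Sy := by
    rintro k ⟨h1, h2, h3, h4⟩
    rcases le_total (N₁ ^ 2 / 8) (k.1 ^ 2) with h | h
    · exact Or.inl ⟨h, h2, h3, h4⟩
    · exact Or.inr ⟨by linarith, h2, h3, h4⟩
  have mSx : MeasurableSet Sx := by
    refine IsClosed.measurableSet ?_
    simp only [hSx, Set.ofPred_and]
    repeat' apply IsClosed.inter
    all_goals exact isClosed_le (by fun_prop) (by fun_prop)
  have mSy : MeasurableSet Sy := by
    refine IsClosed.measurableSet ?_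
    simp only [hSy, Set.ofPred_and]
    repeat' apply IsClosed.inter
    all_goals exact isClosed_le (by fun_prop) (by fun_prop)
  have bx : volume Sx ≤ ENNReal.ofReal (11 * K / N₁ ^ 2) * ENNReal.ofReal (2 * (2 * N₂)) := by
    rw [← volume_abs_sub_le q.2 (2 * N₂)]
    refine prod_le_of_slice mSx _ _ (fun a b h => h.2.2.1) fun b => ?_
    refine le_trans (measure_mono ?_)
      (volume_slice_le hN₁ q.1 (τ - b ^ 3 - (q.2 - b) ^ 3))
    rintro a ⟨h1, h2, h3, h4⟩
    refine ⟨h1, by linarith, le_of_eq_of_le (congrArg _ ?_) h4⟩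
    simp only; ring
  have bY : volume Sy ≤ ENNReal.ofReal (11 * K / N₁ ^ 2) * ENNReal.ofReal (2 * (2 * N₂)) := by
    rw [← volume_abs_sub_le q.1 (2 * N₂)]
    refine prod_le_of_slice' mSy _ _ (fun a b h => h.2.1) fun b => ?_
    refine le_trans (measure_mono ?_)
      (volume_slice_le hN₁ q.2 (τ - b ^ 3 - (q.1 - b) ^ 3))
    rintro a ⟨h1, h2, h3, h4⟩
    refine ⟨h1, by linarith [show |q.2 - a| ≤ 2 * N₂ from h3],
      le_of_eq_of_le (congrArg _ ?_) h4⟩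
    simp only; ring
  calc volume (spatialSet N₁ N₂ K τ q) ≤ volume Sx + volume Sy :=
        (measure_mono hsub).trans (measure_union_le _ _)
    _ ≤ _ := add_le_add bx bY
    _ = ENNReal.ofReal (88 * K * N₂ / N₁ ^ 2) := by
        rw [← ENNReal.ofReal_mul (by positivity), ← ENNReal.ofReal_add (by positivity)
          (by positivity)]
        congr 1; ring

/-- The frequencies `p` such that `p` lies in the first and `ζ - p` in the second frequency
support, up to discarding lower modulation bounds and some of the spatial localisation. -/
def interactionSet (N₁ N₂ L₁ L₂ : ℝ) (ζ : ℝ × ℝ × ℝ) : Set (ℝ × ℝ × ℝ) :=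
  {p | N₁ ^ 2 / 4 ≤ p.2.1 ^ 2 + p.2.2 ^ 2 ∧ |p.1 - p.2.1 ^ 3 - p.2.2 ^ 3| ≤ 2 * L₁ ∧
    |ζ.2.1 - p.2.1| ≤ 2 * N₂ ∧ |ζ.2.2 - p.2.2| ≤ 2 * N₂ ∧
    |(ζ.1 - p.1) - (ζ.2.1 - p.2.1) ^ 3 - (ζ.2.2 - p.2.2) ^ 3| ≤ 2 * L₂}

lemma measurableSet_interactionSet (N₁ N₂ L₁ L₂ : ℝ) (ζ : ℝ × ℝ × ℝ) :
    MeasurableSet (interactionSet N₁ N₂ L₁ L₂ ζ) := by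
  refine IsClosed.measurableSet ?_
  simp only [interactionSet, Set.ofPred_and]
  repeat' apply IsClosed.inter
  all_goals exact isClosed_le (by fun_prop) (by fun_prop)

/-- The time frequency ranges over an interval of length `≲ min L₁ L₂`, and the spatial frequency
over a `spatialSet` with `K ∼ max L₁ L₂`. -/
lemma volume_interactionSet_le {N₁ N₂ L₁ L₂ : ℝ} (hN₂ : 0 < N₂) (hL₁ : 0 < L₁) (hL₂ : 0 < L₂)
    (hN : 32 * N₂ ≤ N₁) (ζ : ℝ × ℝ × ℝ) :
    volume (interactionSet N₁ N₂ L₁ L₂ ζ) ≤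
      ENNReal.ofReal (1600 * N₂ * L₁ * L₂ / N₁ ^ 2) := by
  have hN₁ : 0 < N₁ := by linarith
  have hS := measurableSet_interactionSet N₁ N₂ L₁ L₂ ζ
  have hmax₁ := le_max_left L₁ L₂
  have hmax₂ := le_max_right L₁ L₂
  have hmin : 0 < min L₁ L₂ := lt_min hL₁ hL₂
  calc volume (interactionSet N₁ N₂ L₁ L₂ ζ)
      ≤ ENNReal.ofReal (4 * min L₁ L₂) *
          volume (spatialSet N₁ N₂ (4 * max L₁ L₂) ζ.1 ζ.2) := by
        refine prod_le_of_slice hS _ _ ?_ ?_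
        · rintro a b ⟨h1, h2, h3, h4, h5⟩
          refine ⟨h1, h3, h4, ?_⟩
          simp only at h2 h5
          rw [abs_le] at h2 h5 ⊢
          constructor <;> linarith
        · intro b
          rcases le_total L₁ L₂ with h | h
          · rw [min_eq_left h, show 4 * L₁ = 2 * (2 * L₁) by ring,
              ← volume_abs_sub_le (b.1 ^ 3 + b.2 ^ 3)]
            refine measure_mono ?_
            rintro a ⟨h1, h2, h3, h4, h5⟩
            refine le_of_eq_of_le ?_ h2
            rw [abs_sub_comm]; congr 1; ring
          · rw [min_eq_right h, show 4 * L₂ = 2 * (2 * L₂) by ring,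
              ← volume_abs_sub_le (ζ.1 - (ζ.2.1 - b.1) ^ 3 - (ζ.2.2 - b.2) ^ 3)]
            refine measure_mono ?_
            rintro a ⟨h1, h2, h3, h4, h5⟩
            refine le_of_eq_of_le ?_ h5
            congr 1; simp only; ring
    _ ≤ ENNReal.ofReal (4 * min L₁ L₂) *
          ENNReal.ofReal (88 * (4 * max L₁ L₂) * N₂ / N₁ ^ 2) := by
        gcongr
        exact volume_spatialSet_le hN₂ (by positivity) hN _ _
    _ ≤ ENNReal.ofReal (1600 * N₂ * L₁ * L₂ / N₁ ^ 2) := by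
        rw [← ENNReal.ofReal_mul (by positivity)]
        apply ENNReal.ofReal_le_ofReal
        have : 4 * min L₁ L₂ * (88 * (4 * max L₁ L₂) * N₂ / N₁ ^ 2) =
            1408 * N₂ * (min L₁ L₂ * max L₁ L₂) / N₁ ^ 2 := by ring
        rw [this, min_mul_max]
        gcongr ?_ / _
        nlinarith [mul_pos hN₂ (mul_pos hL₁ hL₂)]

/-! ### Products of Schwartz functions with localised Fourier transforms -/

open scoped FourierTransform SchwartzMap Convolution

section Abstract

variable {V : Type*} [NormedAddCommGroup V] [InnerProductSpace ℝ V] [FiniteDimensional ℝ V]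
  [MeasurableSpace V] [BorelSpace V]

lemma lintegral_enorm_sq_eq (f : 𝓢(V, ℂ)) :
    ∫⁻ x, ‖f x‖ₑ ^ 2 = ENNReal.ofReal (∫ x, ‖f x‖ ^ 2) := by
  rw [ofReal_integral_eq_lintegral_ofReal]
  · refine lintegral_congr fun x => ?_
    rw [ENNReal.ofReal_pow (norm_nonneg _), ofReal_norm]
  · exact (memLp_two_iff_integrable_sq_norm f.continuous.aestronglyMeasurable).1 (f.memLp 2 volume)
  · exact Filter.Eventually.of_forall fun x => by positivity

lemma lintegral_enorm_sq_fourier (f : 𝓢(V, ℂ)) :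
    ∫⁻ x, ‖𝓕 f x‖ₑ ^ 2 = ∫⁻ x, ‖f x‖ₑ ^ 2 := by
  rw [lintegral_enorm_sq_eq, lintegral_enorm_sq_eq, SchwartzMap.integral_norm_sq_fourier]

lemma fourier_fourier_apply (f : 𝓢(V, ℂ)) (x : V) : 𝓕 (𝓕 f) x = f (-x) := by
  have h : 𝓕⁻ (𝓕 f) (-x) = f (-x) := by simp
  rw [← h, SchwartzMap.fourierInv_coe, Real.fourierInv_eq_fourier_neg, neg_neg,
    SchwartzMap.fourier_coe]

/-- Cauchy–Schwarz for the convolution integral, using that its integrand is supported in a set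
of measure at most `M`. -/
lemma enorm_convolution_sq_le (F G : 𝓢(V, ℂ)) (M : ℝ≥0∞) (ζ : V)
    (hM : volume {a : V | F a ≠ 0 ∧ G (ζ - a) ≠ 0} ≤ M) :
    ‖(F ⋆[ContinuousLinearMap.mul ℂ ℂ] G) ζ‖ₑ ^ 2 ≤
      M * ∫⁻ a, ‖F a‖ₑ ^ 2 * ‖G (ζ - a)‖ₑ ^ 2 := by
  set E := {a : V | F a ≠ 0 ∧ G (ζ - a) ≠ 0} with hE
  have mE : MeasurableSet E :=
    ((isOpen_ne_fun F.continuous continuous_const).inter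
      (isOpen_ne_fun (G.continuous.comp (continuous_const.sub continuous_id))
        continuous_const)).measurableSet
  set H : V → ℝ≥0∞ := fun a => ‖F a‖ₑ * ‖G (ζ - a)‖ₑ with hH
  have mH : Measurable H := by
    have h1 := F.continuous
    have h2 := G.continuous
    have h3 : Continuous fun a => ‖F a‖ₑ := by fun_prop
    have h4 : Continuous fun a => ‖G (ζ - a)‖ₑ := by fun_prop
    exact h3.measurable.mul h4.measurable
  have h1 : ‖(F ⋆[ContinuousLinearMap.mul ℂ ℂ] G) ζ‖ₑ ≤
      ∫⁻ a, (E.indicator (fun _ => (1 : ℝ≥0∞)) * H) a := by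
    rw [convolution_def]
    refine (enorm_integral_le_lintegral_enorm _).trans (lintegral_mono fun a => ?_)
    by_cases ha : a ∈ E
    · simp [ha, hH, enorm_mul]
    · have : F a = 0 ∨ G (ζ - a) = 0 := by
        by_contra! h; exact ha h
      rcases this with h | h <;> simp [h]
  have h2 := ENNReal.lintegral_mul_le_Lp_mul_Lq volume Real.HolderConjugate.two_two
    (f := E.indicator (fun _ => (1 : ℝ≥0∞))) (g := H)
    (measurable_const.indicator mE).aemeasurable mH.aemeasurable
  have h3 : ∫⁻ a, E.indicator (fun _ => (1 : ℝ≥0∞)) a ^ (2 : ℝ) = volume E := by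
    rw [← lintegral_indicator_one mE]
    refine lintegral_congr fun a => ?_
    by_cases ha : a ∈ E <;> simp [ha]
  rw [h3] at h2
  have hsq : ∀ x : ℝ≥0∞, (x ^ ((1 : ℝ) / 2)) ^ 2 = x := fun x => by
    rw [← ENNReal.rpow_natCast, ← ENNReal.rpow_mul]; norm_num
  calc ‖(F ⋆[ContinuousLinearMap.mul ℂ ℂ] G) ζ‖ₑ ^ 2
      ≤ (volume E ^ ((1 : ℝ) / 2) * (∫⁻ a, H a ^ (2 : ℝ)) ^ ((1 : ℝ) / 2)) ^ 2 := by
        gcongr; exact h1.trans h2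
    _ = volume E * ∫⁻ a, H a ^ (2 : ℝ) := by rw [mul_pow, hsq, hsq]
    _ ≤ M * ∫⁻ a, ‖F a‖ₑ ^ 2 * ‖G (ζ - a)‖ₑ ^ 2 := by
        gcongr with a
        simp [hH, mul_pow]

/-- If the sets `supp f̂ ∩ (ζ - supp ĝ)` have measure at most `M` uniformly in `ζ`, then
`‖f g‖² ≤ M ‖f‖² ‖g‖²` in `L²`. -/
lemma lintegral_mul_sq_le (f g : 𝓢(V, ℂ)) (M : ℝ≥0∞)
    (hM : ∀ ζ : V, volume {a : V | 𝓕 f a ≠ 0 ∧ 𝓕 g (ζ - a) ≠ 0} ≤ M) :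
    ∫⁻ x, ‖f x * g x‖ₑ ^ 2 ≤ M * ((∫⁻ x, ‖f x‖ₑ ^ 2) * ∫⁻ x, ‖g x‖ₑ ^ 2) := by
  set B := ContinuousLinearMap.mul ℂ ℂ
  have hconv : ∀ x, 𝓕 (SchwartzMap.convolution B (𝓕 f) (𝓕 g)) x = f (-x) * g (-x) := by
    intro x
    rw [SchwartzMap.fourier_convolution, SchwartzMap.pairing_apply_apply, fourier_fourier_apply,
      fourier_fourier_apply]
    rfl
  have mF : Measurable fun a => ‖𝓕 f a‖ₑ ^ 2 := by
    have := (𝓕 f).continuous.measurable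
    fun_prop
  have mG : Measurable fun a => ‖𝓕 g a‖ₑ ^ 2 := by
    have := (𝓕 g).continuous.measurable
    fun_prop
  calc ∫⁻ x, ‖f x * g x‖ₑ ^ 2 = ∫⁻ x, ‖f (-x) * g (-x)‖ₑ ^ 2 :=
        (lintegral_neg_eq_self (fun x => ‖f x * g x‖ₑ ^ 2)).symm
    _ = ∫⁻ ζ, ‖((𝓕 f : 𝓢(V, ℂ)) ⋆[B] (𝓕 g : 𝓢(V, ℂ))) ζ‖ₑ ^ 2 := by
        simp_rw [← hconv, lintegral_enorm_sq_fourier, SchwartzMap.convolution_apply]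
    _ ≤ ∫⁻ ζ, M * ∫⁻ a, ‖𝓕 f a‖ₑ ^ 2 * ‖𝓕 g (ζ - a)‖ₑ ^ 2 :=
        lintegral_mono fun ζ => enorm_convolution_sq_le _ _ M ζ (hM ζ)
    _ = M * ∫⁻ a, ∫⁻ ζ, ‖𝓕 f a‖ₑ ^ 2 * ‖𝓕 g (ζ - a)‖ₑ ^ 2 := by
        have mm : Measurable (Function.uncurry fun ζ a : V =>
            ‖𝓕 f a‖ₑ ^ 2 * ‖𝓕 g (ζ - a)‖ₑ ^ 2) :=
          (mF.comp measurable_snd).mul (mG.comp (measurable_fst.sub measurable_snd))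
        rw [lintegral_const_mul _ mm.lintegral_prod_right, lintegral_lintegral_swap mm.aemeasurable]
    _ = M * ((∫⁻ a, ‖𝓕 f a‖ₑ ^ 2) * ∫⁻ ζ, ‖𝓕 g ζ‖ₑ ^ 2) := by
        congr 1
        rw [← lintegral_mul_const _ mF]
        refine lintegral_congr fun a => ?_
        have mGa : Measurable fun ζ => ‖𝓕 g (ζ - a)‖ₑ ^ 2 :=
          mG.comp (measurable_id.sub_const a)
        rw [lintegral_const_mul _ mGa,
          lintegral_sub_right_eq_self (fun ζ => ‖𝓕 g ζ‖ₑ ^ 2) a]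
    _ = _ := by rw [lintegral_enorm_sq_fourier, lintegral_enorm_sq_fourier]

end Abstract

/-! ### Transport to `ℝ × ℝ × ℝ` -/

/-- `ℝ × ℝ × ℝ` with its Euclidean norm, on which the Fourier transform of Mathlib lives. -/
abbrev E3 : Type := WithLp 2 (ℝ × WithLp 2 (ℝ × ℝ))

/-- The identity `E3 → ℝ × ℝ × ℝ`, as a continuous linear equivalence. -/
def toProd3 : E3 ≃L[ℝ] ℝ × ℝ × ℝ :=
  (WithLp.prodContinuousLinearEquiv 2 ℝ ℝ (WithLp 2 (ℝ × ℝ))).trans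
    ((ContinuousLinearEquiv.refl ℝ ℝ).prodCongr (WithLp.prodContinuousLinearEquiv 2 ℝ ℝ ℝ))

instance isAddHaarMeasure_volume_prod2 : (volume : Measure (ℝ × ℝ)).IsAddHaarMeasure :=
  inferInstanceAs ((volume : Measure ℝ).prod (volume : Measure ℝ)).IsAddHaarMeasure

instance isAddHaarMeasure_volume_prod3 : (volume : Measure (ℝ × ℝ × ℝ)).IsAddHaarMeasure :=
  inferInstanceAs ((volume : Measure ℝ).prod (volume : Measure (ℝ × ℝ))).IsAddHaarMeasure

lemma measurePreserving_toProd3 : MeasurePreserving toProd3 := by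
  have h1 := WithLp.volume_preserving_ofLp ℝ (WithLp 2 (ℝ × ℝ))
  have h2 : MeasurePreserving (Prod.map (id : ℝ → ℝ) (@WithLp.ofLp 2 (ℝ × ℝ))) :=
    (MeasurePreserving.id volume).prod (WithLp.volume_preserving_ofLp ℝ ℝ)
  exact h2.comp h1

/-- A Schwartz function on `ℝ × ℝ × ℝ` seen on Euclidean space. -/
def lift3 (u : 𝓢(ℝ × ℝ × ℝ, ℂ)) : 𝓢(E3, ℂ) :=
  SchwartzMap.compCLMOfContinuousLinearEquiv ℂ toProd3 u

lemma lift3_apply (u : 𝓢(ℝ × ℝ × ℝ, ℂ)) (v : E3) : lift3 u v = u (toProd3 v) := rfl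

/-- The two Fourier transforms differ by the factor `2π` in the phase. -/
lemma fourier_lift3 (u : 𝓢(ℝ × ℝ × ℝ, ℂ)) (a : E3) :
    𝓕 (lift3 u) a = ftt (fun t x y => u (t, x, y)) (2 * Real.pi * (toProd3 a).1)
      (2 * Real.pi * (toProd3 a).2.1) (2 * Real.pi * (toProd3 a).2.2) := by
  set b := toProd3 a with hb
  set w : ℝ × ℝ × ℝ → ℂ := fun p => Complex.exp (-Complex.I *
    ((p.1 * (2 * Real.pi * b.1) + p.2.1 * (2 * Real.pi * b.2.1) +
      p.2.2 * (2 * Real.pi * b.2.2) : ℝ) : ℂ)) * u p with hw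
  have hint : Integrable w := by
    refine (u.integrable (μ := volume)).bdd_mul (c := 1) ?_ ?_
    · exact Continuous.aestronglyMeasurable (by fun_prop)
    · refine Filter.Eventually.of_forall fun p => ?_
      rw [neg_mul, mul_comm, ← neg_mul, ← Complex.ofReal_neg, Complex.norm_exp_ofReal_mul_I]
  have h1 : 𝓕 (lift3 u) a = ∫ v : E3, w (toProd3 v) := by
    rw [SchwartzMap.fourier_coe, Real.fourier_eq]
    refine integral_congr_ae (Filter.Eventually.of_forall fun v => ?_)
    simp only [hw, lift3_apply, Circle.smul_def, Real.fourierChar_apply, smul_eq_mul]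
    congr 2
    have : inner ℝ v a = (toProd3 v).1 * b.1 + (toProd3 v).2.1 * b.2.1 +
        (toProd3 v).2.2 * b.2.2 := by
      rw [WithLp.prod_inner_apply, WithLp.prod_inner_apply]
      simp [hb, toProd3]
      ring
    rw [this]; push_cast; ring
  rw [h1, measurePreserving_toProd3.integral_comp toProd3.toHomeomorph.measurableEmbedding,
    Measure.volume_eq_prod, integral_prod _ hint]
  unfold ftt
  refine integral_congr_ae ?_
  filter_upwards [hint.prod_right_ae] with t ht
  rw [Measure.volume_eq_prod, integral_prod _ ht]

lemma l2norm3_eq (w : ℝ → ℝ → ℝ → ℂ)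
    (hw : Continuous fun p : ℝ × ℝ × ℝ => w p.1 p.2.1 p.2.2) :
    l2norm3 w = (∫⁻ v : E3, ‖w (toProd3 v).1 (toProd3 v).2.1 (toProd3 v).2.2‖ₑ ^ 2) ^
      ((1 : ℝ) / 2) := by
  unfold l2norm3
  have hm : Measurable fun p : ℝ × ℝ × ℝ => ‖w p.1 p.2.1 p.2.2‖ₑ ^ 2 := by
    have := hw.measurable
    fun_prop
  rw [measurePreserving_toProd3.lintegral_comp hm]
  congr 1
  refine lintegral_congr fun p => ?_
  simp [enorm_eq_nnnorm]

/-- Passing to frequencies rescaled by `2π > 1` does not increase the measure of a set. -/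
lemma volume_preimage_le (S : Set (ℝ × ℝ × ℝ)) (hS : MeasurableSet S) :
    volume {a : E3 | (2 * Real.pi) • toProd3 a ∈ S} ≤ volume S := by
  have h2 : (1 : ℝ) ≤ 2 * Real.pi := by linarith [Real.pi_gt_three]
  have hm : MeasurableSet ((fun x : ℝ × ℝ × ℝ => (2 * Real.pi) • x) ⁻¹' S) :=
    (measurable_const_smul (2 * Real.pi)) hS
  have h3 : volume {a : E3 | (2 * Real.pi) • toProd3 a ∈ S} =
      volume ((fun x : ℝ × ℝ × ℝ => (2 * Real.pi) • x) ⁻¹' S) :=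
    measurePreserving_toProd3.measure_preimage hm.nullMeasurableSet
  rw [h3, Measure.addHaar_preimage_smul _ (by linarith)]
  refine mul_le_of_le_one_left zero_le ?_
  rw [ENNReal.ofReal_le_one, abs_of_nonneg (by positivity)]
  exact inv_le_one_of_one_le₀ (one_le_pow₀ h2)

/-! ### The bilinear estimate -/

/-- Bilinear Strichartz estimate for products with strongly separated spatial
frequencies: if `N₁ ≥ c₀ N₂` and `ũᵢ` is supported at `|(ξ,η)| ∼ Nᵢ`,
`|τ-ξ³-η³| ∼ Lᵢ`, then
`‖u₁u₂‖_{L²} ≤ C N₁⁻¹ N₂^{1/2} L₁^{1/2} L₂^{1/2} ‖u₁‖_{L²} ‖u₂‖_{L²}`. -/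
theorem bilinear_strichartz_product :
    ∃ c₀ C : ℝ, 2 ≤ c₀ ∧ 0 < C ∧
      ∀ N₁ N₂ L₁ L₂ : ℝ,
        (∃ n : ℤ, N₁ = 2 ^ n) → (∃ n : ℤ, N₂ = 2 ^ n) →
        (∃ n : ℤ, L₁ = 2 ^ n) → (∃ n : ℤ, L₂ = 2 ^ n) →
        c₀ * N₂ ≤ N₁ →
        ∀ u₁ u₂ : SchwartzMap (ℝ × ℝ × ℝ) ℂ,
          (∀ τ ξ η : ℝ, ftt (fun t x y => u₁ (t, x, y)) τ ξ η ≠ 0 →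
            (N₁ / 2 ≤ Real.sqrt (ξ ^ 2 + η ^ 2) ∧ Real.sqrt (ξ ^ 2 + η ^ 2) ≤ 2 * N₁ ∧
              L₁ / 2 ≤ |τ - ξ ^ 3 - η ^ 3| ∧ |τ - ξ ^ 3 - η ^ 3| ≤ 2 * L₁)) →
          (∀ τ ξ η : ℝ, ftt (fun t x y => u₂ (t, x, y)) τ ξ η ≠ 0 →
            (N₂ / 2 ≤ Real.sqrt (ξ ^ 2 + η ^ 2) ∧ Real.sqrt (ξ ^ 2 + η ^ 2) ≤ 2 * N₂ ∧
              L₂ / 2 ≤ |τ - ξ ^ 3 - η ^ 3| ∧ |τ - ξ ^ 3 - η ^ 3| ≤ 2 * L₂)) →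
          l2norm3 (fun t x y => u₁ (t, x, y) * u₂ (t, x, y)) ≤
            ENNReal.ofReal
                (C * N₁⁻¹ * N₂ ^ ((1 : ℝ) / 2) * L₁ ^ ((1 : ℝ) / 2) * L₂ ^ ((1 : ℝ) / 2)) *
              (l2norm3 (fun t x y => u₁ (t, x, y)) * l2norm3 (fun t x y => u₂ (t, x, y))) := by
  refine ⟨32, 40, by norm_num, by norm_num, ?_⟩
  rintro N₁ N₂ L₁ L₂ ⟨n₁, rfl⟩ ⟨n₂, rfl⟩ ⟨l₁, rfl⟩ ⟨l₂, rfl⟩ hN u₁ u₂ h₁ h₂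
  have pN₁ : (0 : ℝ) < 2 ^ n₁ := by positivity
  have pN₂ : (0 : ℝ) < 2 ^ n₂ := by positivity
  have pL₁ : (0 : ℝ) < 2 ^ l₁ := by positivity
  have pL₂ : (0 : ℝ) < 2 ^ l₂ := by positivity
  generalize (2 : ℝ) ^ n₁ = N₁ at *
  generalize (2 : ℝ) ^ n₂ = N₂ at *
  generalize (2 : ℝ) ^ l₁ = L₁ at *
  generalize (2 : ℝ) ^ l₂ = L₂ at *
  have key := lintegral_mul_sq_le (lift3 u₁) (lift3 u₂)
    (ENNReal.ofReal (1600 * N₂ * L₁ * L₂ / N₁ ^ 2)) (by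
      intro ζ
      refine le_trans (measure_mono ?_) ((volume_preimage_le _
        (measurableSet_interactionSet N₁ N₂ L₁ L₂ ((2 * Real.pi) • toProd3 ζ))).trans
        (volume_interactionSet_le pN₂ pL₁ pL₂ hN _))
      rintro a ⟨ha₁, ha₂⟩
      rw [fourier_lift3] at ha₁ ha₂
      obtain ⟨hA, -, -, hB⟩ := h₁ _ _ _ ha₁
      obtain ⟨-, hC, -, hD⟩ := h₂ _ _ _ ha₂
      have hsub₁ : 2 * Real.pi * (toProd3 (ζ - a)).1 =
          2 * Real.pi * (toProd3 ζ).1 - 2 * Real.pi * (toProd3 a).1 := by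
        rw [map_sub, Prod.fst_sub, mul_sub]
      have hsub₂ : 2 * Real.pi * (toProd3 (ζ - a)).2.1 =
          2 * Real.pi * (toProd3 ζ).2.1 - 2 * Real.pi * (toProd3 a).2.1 := by
        rw [map_sub, Prod.snd_sub, Prod.fst_sub, mul_sub]
      have hsub₃ : 2 * Real.pi * (toProd3 (ζ - a)).2.2 =
          2 * Real.pi * (toProd3 ζ).2.2 - 2 * Real.pi * (toProd3 a).2.2 := by
        rw [map_sub, Prod.snd_sub, Prod.snd_sub, mul_sub]
      rw [hsub₂, hsub₃] at hC
      rw [hsub₁, hsub₂, hsub₃] at hD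
      refine ⟨?_, hB, ?_, ?_, hD⟩
      · have h := (Real.le_sqrt' (by positivity)).1 hA
        refine le_trans (le_of_eq ?_) h
        ring
      · exact (Real.abs_le_sqrt (le_add_of_nonneg_right (sq_nonneg _))).trans hC
      · exact (Real.abs_le_sqrt (le_add_of_nonneg_left (sq_nonneg _))).trans hC)
  have c₁ := u₁.continuous
  have c₂ := u₂.continuous
  rw [l2norm3_eq _ (by fun_prop), l2norm3_eq _ (by fun_prop), l2norm3_eq _ (by fun_prop)]
  refine (ENNReal.rpow_le_rpow key (by norm_num : (0 : ℝ) ≤ 1 / 2)).trans (le_of_eq ?_)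
  rw [ENNReal.mul_rpow_of_nonneg _ _ (by norm_num), ENNReal.mul_rpow_of_nonneg _ _ (by norm_num),
    ENNReal.ofReal_rpow_of_nonneg (by positivity) (by norm_num)]
  congr 2
  rw [Real.div_rpow (by positivity) (by positivity), Real.mul_rpow (by positivity) pL₂.le,
    Real.mul_rpow (by positivity) pL₁.le, Real.mul_rpow (by norm_num) pN₂.le,
    ← Real.sqrt_eq_rpow (1600 : ℝ), ← Real.sqrt_eq_rpow (N₁ ^ 2), Real.sqrt_sq pN₁.le,
    show (1600 : ℝ) = 40 ^ 2 by norm_num, Real.sqrt_sq (by norm_num)]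
  ring
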